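/- For every p ∈ [1,3) there exists a sequence (fₙ) of bounded measurable 2π-periodic functions fₙ : ℝ → ℝ and a constant C₀ such that ‖fₙ‖_{L^p(0,2π)} ≤ C₀ for all n while ‖C[fₙ]‖_{L^p(0,2π)} → ∞ as n → ∞. In particular, there is no constant C' such that ‖C[f]‖_{L^p(0,2π)} ≤ C' ‖f‖_{L^p(0,2π)}³ holds for all bounded measurable 2π-periodic f. -/

import Mathlib

open MeasureTheory Real Set

noncomputable section

/-- The dispersion relation `ω(p) = |sin(p/2)|`. -/
def ω (p : ℝ) : ℝ := |Real.sin (p / 2)|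

/-- Parameterization `h(x,z)` of the resonant manifold. -/
def resH (x z : ℝ) : ℝ :=
  (z - x) / 2 + 2 * Real.arcsin (Real.tan (|z - x| / 4) * Real.cos ((x + z) / 4))

/-- `F₊(x,z) = (cos(x/2)+cos(z/2))² + 4 sin(x/2) sin(z/2)`. -/
def Fplus (x z : ℝ) : ℝ :=
  (Real.cos (x / 2) + Real.cos (z / 2)) ^ 2 + 4 * Real.sin (x / 2) * Real.sin (z / 2)

/-- `F₋(x,z) = (cos(x/2)+cos(z/2))² − 4 sin(x/2) sin(z/2)`. -/
def Fminus (x z : ℝ) : ℝ :=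
  (Real.cos (x / 2) + Real.cos (z / 2)) ^ 2 - 4 * Real.sin (x / 2) * Real.sin (z / 2)

/-- The collision operator of the FPUT kinetic wave equation, with
`p₁ = h(p₀,p₂)` and `p₃ = p₀ + p₁ − p₂`. -/
def collision (f : ℝ → ℝ) (p₀ : ℝ) : ℝ :=
  ∫ p₂ in (0:ℝ)..(2 * π),
    (ω p₀ * ω (resH p₀ p₂) * ω p₂ * ω (p₀ + resH p₀ p₂ - p₂) / Real.sqrt (Fplus p₀ p₂)) *
      (f (resH p₀ p₂) * f p₂ * f (p₀ + resH p₀ p₂ - p₂)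
        + f p₀ * f p₂ * f (p₀ + resH p₀ p₂ - p₂)
        - f p₀ * f (resH p₀ p₂) * f (p₀ + resH p₀ p₂ - p₂)
        - f p₀ * f (resH p₀ p₂) * f p₂)

/-- The measure on the fundamental domain `(0,2π)`. -/
def μ2π : Measure ℝ := volume.restrict (Set.Ioo 0 (2 * π))

/-!
Let `x` be near `π / 2` and `z` near `3 * π / 2`. Then `p₁ = resH x z` stays near `π / 2`, and
`p₃ = x + p₁ - z` stays near `-π / 2 ≡ 3 * π / 2` modulo `2 * π`. The map `z ↦ resH (π / 2) z` has
a critical point at `3 * π / 2`: an `η`-neighbourhood of `3 * π / 2` in `z` and an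
`η ^ 2`-neighbourhood of `π / 2` in `x` are sent into a `4 * η ^ 2`-neighbourhood of `π / 2`.

So take `f` of height `A ∼ η ^ (-2 / p)` on the short arc around `π / 2` and of height
`B ∼ η ^ (-1 / p)` on the long arc around `3 * π / 2`, which keeps `‖f‖_p` bounded. For `x`
within `η ^ 2` of `π / 2` the loss term `f(x) f(p₁) f(z) = A ^ 2 * B` dominates on the long arc, and
the bracket is nonpositive for all other `z`. Hence `-C[f] ≳ A ^ 2 * B * η` on a set of
measure `∼ η ^ 2`, and `‖C[f]‖_p ≳ η ^ (1 - 3 / p)`, which blows up as `η → 0` exactly when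
`p < 3`.
-/

section Trigonometry

lemma one_half_le_cos_of_abs_le_pi_div_three {x : ℝ} (hx : |x| ≤ π / 3) : 1 / 2 ≤ cos x := by
  rw [← cos_pi_div_three, ← cos_abs x]
  exact cos_le_cos_of_nonneg_of_le_pi (abs_nonneg x) (by linarith [pi_pos]) hx

lemma abs_tan_sub_tan_le {x y : ℝ} (hx : |x| ≤ π / 3) (hy : |y| ≤ π / 3) :
    |tan x - tan y| ≤ 4 * |x - y| := by
  have hcx := one_half_le_cos_of_abs_le_pi_div_three hx
  have hcy := one_half_le_cos_of_abs_le_pi_div_three hy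
  have hcos : 1 / 4 ≤ cos x * cos y := by nlinarith
  have htan : tan x - tan y = sin (x - y) / (cos x * cos y) := by
    rw [tan_eq_sin_div_cos, tan_eq_sin_div_cos, sin_sub,
      div_sub_div _ _ (by linarith) (by linarith)]
  rw [htan, abs_div, abs_of_pos (by linarith : 0 < cos x * cos y), div_le_iff₀ (by linarith)]
  calc |sin (x - y)| ≤ |x - y| := abs_sin_le_abs
    _ ≤ 4 * |x - y| * (cos x * cos y) := by nlinarith [abs_nonneg (x - y)]

lemma abs_arcsin_sub_arcsin_le {s u v : ℝ} (hs : s < 1) (hu : |u| ≤ s) (hv : |v| ≤ s) :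
    |arcsin u - arcsin v| ≤ 1 / √(1 - s ^ 2) * |u - v| := by
  have hs0 : 0 ≤ s := (abs_nonneg u).trans hu
  refine Convex.norm_image_sub_le_of_norm_hasDerivWithin_le (f' := fun t ↦ 1 / √(1 - t ^ 2))
    (s := Icc (-s) s) (fun t ht ↦ ?_) (fun t ht ↦ ?_) (convex_Icc _ _) (abs_le.1 hv) (abs_le.1 hu)
  · exact (hasDerivAt_arcsin (by linarith [ht.1]) (by linarith [ht.2])).hasDerivWithinAt
  · rw [norm_of_nonneg (by positivity)]
    have hpos : 0 < 1 - s ^ 2 := by nlinarith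
    have hsq : t ^ 2 ≤ s ^ 2 := sq_le_sq' ht.1 ht.2
    gcongr

lemma abs_arcsin_sub_arcsin_le_two_mul {u v : ℝ} (hu : |u| ≤ 1 / 2) (hv : |v| ≤ 1 / 2) :
    |arcsin u - arcsin v| ≤ 2 * |u - v| := by
  refine (abs_arcsin_sub_arcsin_le (by norm_num) hu hv).trans ?_
  have hsqrt : 1 / 2 ≤ √(1 - (1 / 2) ^ 2) := le_sqrt_of_sq_le (by norm_num)
  gcongr
  rw [div_le_iff₀ (by linarith)]
  linarith

lemma abs_tan_pi_div_four_add_sub_one_le {d : ℝ} (hd : |d| ≤ 1 / 4) :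
    |tan (π / 4 + d) - 1| ≤ 4 * |d| := by
  have hπ := pi_gt_three
  have hd' := abs_le.1 hd
  have h := abs_tan_sub_tan_le (x := π / 4 + d) (y := π / 4)
    (abs_le.2 ⟨by linarith, by linarith⟩) (abs_le.2 ⟨by linarith, by linarith⟩)
  rwa [tan_pi_div_four, add_sub_cancel_left] at h

lemma abs_tan_mul_sin_sub_sin_le {d : ℝ} (hd : |d| ≤ 1 / 4) (e : ℝ) :
    |tan (π / 4 + d) * sin e - sin d| ≤ 4 * |d| * |e| + |e - d| :=
  calc |tan (π / 4 + d) * sin e - sin d|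
      = |(tan (π / 4 + d) - 1) * sin e + (sin e - sin d)| := by ring_nf
    _ ≤ |tan (π / 4 + d) - 1| * |sin e| + |sin e - sin d| := by
        rw [← abs_mul]
        exact abs_add_le _ _
    _ ≤ 4 * |d| * |e| + |e - d| :=
        add_le_add (mul_le_mul (abs_tan_pi_div_four_add_sub_one_le hd) abs_sin_le_abs
          (abs_nonneg _) (by positivity)) (abs_sin_sub_sin_le e d)

lemma abs_arcsin_tan_mul_sin_sub_le {d e : ℝ} (hd : |d| ≤ 1 / 4) (he : |e| ≤ 1 / 4) :
    |arcsin (tan (π / 4 + d) * sin e) - d| ≤ 2 * (4 * |d| * |e| + |e - d|) := by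
  have hπ := pi_gt_three
  have hd' := abs_le.1 hd
  have htan : |tan (π / 4 + d)| ≤ 2 := by
    have h := abs_add_le (tan (π / 4 + d) - 1) 1
    rw [sub_add_cancel, abs_one] at h
    linarith [abs_tan_pi_div_four_add_sub_one_le hd]
  have hprod : |tan (π / 4 + d) * sin e| ≤ 1 / 2 :=
    calc |tan (π / 4 + d) * sin e| = |tan (π / 4 + d)| * |sin e| := abs_mul _ _
      _ ≤ 2 * (1 / 4) := by
          gcongr
          exact abs_sin_le_abs.trans he
      _ = 1 / 2 := by norm_num
  calc |arcsin (tan (π / 4 + d) * sin e) - d|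
      = |arcsin (tan (π / 4 + d) * sin e) - arcsin (sin d)| := by
        rw [arcsin_sin (by linarith) (by linarith)]
    _ ≤ 2 * |tan (π / 4 + d) * sin e - sin d| :=
        abs_arcsin_sub_arcsin_le_two_mul hprod (abs_sin_le_abs.trans (by linarith))
    _ ≤ 2 * (4 * |d| * |e| + |e - d|) := by
        gcongr
        exact abs_tan_mul_sin_sub_sin_le hd e

end Trigonometry

section ResonantManifold

lemma abs_resH_le {x z : ℝ} (hxz : |z - x| ≤ 1 / 2) : |resH x z| ≤ 9 / 2 * |z - x| := by
  have hπ := pi_gt_three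
  set T := tan (|z - x| / 4) * cos ((x + z) / 4) with hT
  have htan : |tan (|z - x| / 4)| ≤ |z - x| := by
    have h := abs_tan_sub_tan_le (x := |z - x| / 4) (y := 0)
      (by rw [abs_of_nonneg (by positivity)]; linarith) (by rw [abs_zero]; positivity)
    rw [tan_zero, sub_zero, sub_zero, abs_of_nonneg (by positivity : 0 ≤ |z - x| / 4)] at h
    linarith
  have hT_le : |T| ≤ |z - x| := by
    rw [hT, abs_mul]
    exact (mul_le_of_le_one_right (abs_nonneg _) (abs_cos_le_one _)).trans htan
  have harcsin : |arcsin T| ≤ 2 * |T| := by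
    simpa using abs_arcsin_sub_arcsin_le_two_mul (hT_le.trans hxz) (v := 0) (by norm_num)
  calc |resH x z| ≤ |(z - x) / 2| + |2 * arcsin T| := abs_add_le _ _
    _ = |z - x| / 2 + 2 * |arcsin T| := by rw [abs_div, abs_mul, abs_two]
    _ ≤ 9 / 2 * |z - x| := by linarith

lemma resH_pi_div_two_add {a b : ℝ} (hab : a - b ≤ π) :
    resH (π / 2 + a) (3 * π / 2 + b) =
      π / 2 + 2 * ((b - a) / 4 - arcsin (tan (π / 4 + (b - a) / 4) * sin ((a + b) / 4))) := by
  have habs : |3 * π / 2 + b - (π / 2 + a)| / 4 = π / 4 + (b - a) / 4 := by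
    rw [abs_of_nonneg (by linarith)]
    ring
  have hcos : cos ((π / 2 + a + (3 * π / 2 + b)) / 4) = -sin ((a + b) / 4) := by
    rw [← cos_add_pi_div_two]
    ring_nf
  rw [resH, habs, hcos, mul_neg, arcsin_neg]
  ring

lemma abs_resH_sub_pi_div_two_le {x z : ℝ} (hxz : |x - π / 2| + |z - 3 * π / 2| ≤ 1) :
    |resH x z - π / 2| ≤ 2 * |x - π / 2| + (|x - π / 2| + |z - 3 * π / 2|) ^ 2 := by
  obtain ⟨a, rfl⟩ : ∃ a, x = π / 2 + a := ⟨x - π / 2, by ring⟩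
  obtain ⟨b, rfl⟩ : ∃ b, z = 3 * π / 2 + b := ⟨z - 3 * π / 2, by ring⟩
  rw [add_sub_cancel_left, add_sub_cancel_left] at *
  rw [resH_pi_div_two_add (by linarith [pi_gt_three, le_abs_self a, neg_abs_le b]),
    add_sub_cancel_left]
  set d := (b - a) / 4 with hd
  set e := (a + b) / 4 with he
  have hd_le : |d| ≤ (|a| + |b|) / 4 := by
    rw [hd, abs_div, abs_of_pos (by norm_num : (0 : ℝ) < 4)]
    linarith [abs_sub b a]
  have he_le : |e| ≤ (|a| + |b|) / 4 := by
    rw [he, abs_div, abs_of_pos (by norm_num : (0 : ℝ) < 4)]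
    linarith [abs_add_le a b]
  have hed : |e - d| = |a| / 2 := by
    rw [show e - d = a / 2 by rw [hd, he]; ring, abs_div, abs_two]
  calc |2 * (d - arcsin (tan (π / 4 + d) * sin e))|
      = 2 * |arcsin (tan (π / 4 + d) * sin e) - d| := by rw [abs_mul, abs_two, abs_sub_comm]
    _ ≤ 2 * (2 * (4 * |d| * |e| + |e - d|)) := by
        gcongr
        exact abs_arcsin_tan_mul_sin_sub_le (by linarith) (by linarith)
    _ ≤ 2 * (2 * (4 * ((|a| + |b|) / 4) * ((|a| + |b|) / 4) + |a| / 2)) := by rw [hed]; gcongr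
    _ = 2 * |a| + (|a| + |b|) ^ 2 := by ring

lemma abs_resH_sub_pi_div_two_le_four_mul_sq {η x z : ℝ} (hη : η ≤ 1 / 10)
    (hx : |x - π / 2| ≤ η ^ 2) (hz : |z - 3 * π / 2| ≤ η) : |resH x z - π / 2| ≤ 4 * η ^ 2 := by
  have hη0 : 0 ≤ η := (abs_nonneg _).trans hz
  calc |resH x z - π / 2| ≤ 2 * |x - π / 2| + (|x - π / 2| + |z - 3 * π / 2|) ^ 2 :=
        abs_resH_sub_pi_div_two_le (by nlinarith)
    _ ≤ 2 * η ^ 2 + (η ^ 2 + η) ^ 2 := by gcongr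
    _ = (2 + (η + 1) ^ 2) * η ^ 2 := by ring
    _ ≤ 4 * η ^ 2 := by gcongr; nlinarith

lemma measurable_resH (x : ℝ) : Measurable (resH x) := by
  have htan : Measurable fun z : ℝ ↦ tan (|z - x| / 4) := by
    simp_rw [tan_eq_sin_div_cos]
    fun_prop
  unfold resH
  fun_prop

lemma Fplus_le_four (x z : ℝ) : Fplus x z ≤ 4 := by
  unfold Fplus
  nlinarith [sin_sq_add_cos_sq (x / 2), sin_sq_add_cos_sq (z / 2),
    sq_nonneg (sin (x / 2) - sin (z / 2)), sq_nonneg (cos (x / 2) - cos (z / 2))]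

lemma Fplus_pos {x z : ℝ} (hx : x ∈ Ioo 0 (2 * π)) (hz : z ∈ Icc 0 (2 * π)) : 0 < Fplus x z := by
  have hsx : 0 < sin (x / 2) := sin_pos_of_pos_of_lt_pi (by linarith [hx.1]) (by linarith [hx.2])
  have hsz : 0 ≤ sin (z / 2) :=
    sin_nonneg_of_nonneg_of_le_pi (by linarith [hz.1]) (by linarith [hz.2])
  unfold Fplus
  rcases hsz.eq_or_lt with hsz | hsz
  · have hne : cos (x / 2) + cos (z / 2) ≠ 0 := fun h ↦ by
      have hcos : cos (x / 2) ^ 2 = cos (z / 2) ^ 2 := by rw [eq_neg_of_add_eq_zero_left h, neg_sq]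
      nlinarith [sin_sq_add_cos_sq (x / 2), sin_sq_add_cos_sq (z / 2)]
    rw [← hsz]
    positivity
  · positivity

lemma continuous_ω : Continuous ω := by
  unfold ω
  fun_prop

lemma ω_nonneg (t : ℝ) : 0 ≤ ω t := abs_nonneg _

lemma ω_le_one (t : ℝ) : ω t ≤ 1 := abs_sin_le_one _

lemma abs_ω_sub_ω_le (t s : ℝ) : |ω t - ω s| ≤ |t - s| / 2 :=
  calc |ω t - ω s| ≤ |sin (t / 2) - sin (s / 2)| := abs_abs_sub_abs_le _ _
    _ ≤ |t / 2 - s / 2| := abs_sin_sub_sin_le _ _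
    _ = |t - s| / 2 := by rw [← sub_div, abs_div, abs_two]

lemma ω_pi_div_two : ω (π / 2) = √2 / 2 := by
  rw [ω, show π / 2 / 2 = π / 4 by ring, sin_pi_div_four, abs_of_pos (by positivity)]

lemma ω_neg (t : ℝ) : ω (-t) = ω t := by
  rw [ω, ω, neg_div, sin_neg, abs_neg]

lemma ω_add_two_pi (t : ℝ) : ω (t + 2 * π) = ω t := by
  rw [ω, ω, show (t + 2 * π) / 2 = t / 2 + π by ring, sin_add_pi, abs_neg]

lemma one_half_le_ω_of_near {s t : ℝ} (hs : ω s = √2 / 2) (hts : |t - s| ≤ 2 / 5) :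
    1 / 2 ≤ ω t := by
  have hsqrt : 7 / 5 ≤ √2 := le_sqrt_of_sq_le (by norm_num)
  linarith [(abs_le.1 (abs_ω_sub_ω_le t s)).1]

end ResonantManifold

section CollisionIntegrand

/-- The weight `ω(p₀) ω(p₁) ω(p₂) ω(p₃) / √F₊(p₀, p₂)` of the collision integral, as a function of
the free momenta `x = p₀` and `z = p₂`. -/
def collisionWeight (x z : ℝ) : ℝ :=
  ω x * ω (resH x z) * ω z * ω (x + resH x z - z) / √(Fplus x z)

/-- The cubic gain-minus-loss bracket of the collision integral, as a function of the free momenta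
`x = p₀` and `z = p₂`. -/
def collisionBracket (f : ℝ → ℝ) (x z : ℝ) : ℝ :=
  f (resH x z) * f z * f (x + resH x z - z) + f x * f z * f (x + resH x z - z)
    - f x * f (resH x z) * f (x + resH x z - z) - f x * f (resH x z) * f z

lemma collision_eq_setIntegral (f : ℝ → ℝ) (x : ℝ) :
    collision f x = ∫ z in Ioo 0 (2 * π), collisionWeight x z * collisionBracket f x z := by
  rw [← integral_Ioc_eq_integral_Ioo, ← intervalIntegral.integral_of_le two_pi_pos.le]
  rfl

lemma collisionWeight_nonneg (x z : ℝ) : 0 ≤ collisionWeight x z := by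
  unfold collisionWeight ω
  positivity

lemma measurable_collisionWeight (x : ℝ) : Measurable (collisionWeight x) := by
  have hω := continuous_ω.measurable
  have hresH := measurable_resH x
  unfold collisionWeight Fplus
  fun_prop

lemma exists_collisionWeight_le {x : ℝ} (hx : x ∈ Ioo 0 (2 * π)) :
    ∃ K, ∀ z ∈ Icc 0 (2 * π), collisionWeight x z ≤ K := by
  have hcont : Continuous (Fplus x) := by unfold Fplus; fun_prop
  obtain ⟨K, hK⟩ := isCompact_Icc.exists_bound_of_continuousOn (f := fun z ↦ (√(Fplus x z))⁻¹)
    (hcont.sqrt.continuousOn.inv₀ fun z hz ↦ (sqrt_pos.2 (Fplus_pos hx hz)).ne')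
  refine ⟨K, fun z hz ↦ ?_⟩
  have hω : ω x * ω (resH x z) * ω z * ω (x + resH x z - z) ≤ 1 * 1 * 1 * 1 := by
    gcongr <;> first | exact ω_nonneg _ | exact ω_le_one _
  calc collisionWeight x z ≤ 1 * (√(Fplus x z))⁻¹ := by
        rw [collisionWeight, div_eq_mul_inv]
        gcongr
        linarith
    _ ≤ K := by
        rw [one_mul]
        exact (le_norm_self _).trans (hK z hz)

lemma one_div_le_collisionWeight {x z : ℝ} (hx : |x - π / 2| ≤ 1 / 100)
    (hz : |z - 3 * π / 2| ≤ 1 / 10) : 1 / 32 ≤ collisionWeight x z := by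
  have hπ := pi_gt_three
  have hresH := abs_resH_sub_pi_div_two_le_four_mul_sq (η := 1 / 10) (x := x) le_rfl
    (by linarith) hz
  have hx' := abs_le.1 hx
  have hz' := abs_le.1 hz
  have hresH' := abs_le.1 hresH
  have hω₀ : 1 / 2 ≤ ω x := one_half_le_ω_of_near ω_pi_div_two (by linarith)
  have hω₁ : 1 / 2 ≤ ω (resH x z) := one_half_le_ω_of_near ω_pi_div_two (by linarith)
  have hω₂ : 1 / 2 ≤ ω z := by
    refine one_half_le_ω_of_near (s := -(π / 2) + 2 * π) ?_ (abs_le.2 ⟨?_, ?_⟩)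
    · rw [ω_add_two_pi, ω_neg, ω_pi_div_two]
    all_goals linarith
  have hω₃ : 1 / 2 ≤ ω (x + resH x z - z) := by
    refine one_half_le_ω_of_near (s := -(π / 2)) ?_ (abs_le.2 ⟨?_, ?_⟩)
    · rw [ω_neg, ω_pi_div_two]
    all_goals linarith
  have hF : 0 < Fplus x z := Fplus_pos ⟨by linarith, by linarith⟩ ⟨by linarith, by linarith⟩
  have hsqrt : √(Fplus x z) ≤ 2 := sqrt_le_iff.2 ⟨by norm_num, by linarith [Fplus_le_four x z]⟩
  calc (1 / 32 : ℝ) = 1 / 2 * (1 / 2) * (1 / 2) * (1 / 2) / 2 := by norm_num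
    _ ≤ collisionWeight x z := by
      unfold collisionWeight
      have := sqrt_pos.2 hF
      gcongr

lemma measurable_collisionBracket {f : ℝ → ℝ} (hf : Measurable f) (x : ℝ) :
    Measurable (collisionBracket f x) := by
  have hresH := measurable_resH x
  unfold collisionBracket
  fun_prop

lemma abs_collisionBracket_le {f : ℝ → ℝ} {M : ℝ} (hM : ∀ t, |f t| ≤ M) (x z : ℝ) :
    |collisionBracket f x z| ≤ 4 * M ^ 3 := by
  have hM0 : 0 ≤ M := (abs_nonneg _).trans (hM 0)
  have htriple (u v w : ℝ) : |f u * f v * f w| ≤ M ^ 3 :=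
    calc |f u * f v * f w| = |f u| * |f v| * |f w| := by rw [abs_mul, abs_mul]
      _ ≤ M * M * M := by gcongr <;> exact hM _
      _ = M ^ 3 := by ring
  have h₁ := abs_le.1 (htriple (resH x z) z (x + resH x z - z))
  have h₂ := abs_le.1 (htriple x z (x + resH x z - z))
  have h₃ := abs_le.1 (htriple x (resH x z) (x + resH x z - z))
  have h₄ := abs_le.1 (htriple x (resH x z) z)
  rw [collisionBracket, abs_le]
  constructor <;> linarith

lemma integrableOn_collisionWeight_mul_collisionBracket {f : ℝ → ℝ} {M : ℝ} (hf : Measurable f)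
    (hM : ∀ t, |f t| ≤ M) {x : ℝ} (hx : x ∈ Ioo 0 (2 * π)) :
    IntegrableOn (fun z ↦ collisionWeight x z * collisionBracket f x z) (Ioo 0 (2 * π)) := by
  obtain ⟨K, hK⟩ := exists_collisionWeight_le hx
  refine Measure.integrableOn_of_bounded (M := K * (4 * M ^ 3)) measure_Ioo_lt_top.ne
    ((measurable_collisionWeight x).mul (measurable_collisionBracket hf x)).aestronglyMeasurable ?_
  filter_upwards [ae_restrict_mem measurableSet_Ioo] with z hz
  have hweight := hK z (Ioo_subset_Icc_self hz)
  rw [norm_mul, norm_of_nonneg (collisionWeight_nonneg x z)]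
  exact mul_le_mul hweight (abs_collisionBracket_le hM x z) (norm_nonneg _)
    ((collisionWeight_nonneg x z).trans hweight)

lemma collisionBracket_nonpos_of_eq_zero {f : ℝ → ℝ} (hf : ∀ t, 0 ≤ f t) {x z : ℝ}
    (hz : f z = 0) : collisionBracket f x z ≤ 0 := by
  have := mul_nonneg (mul_nonneg (hf x) (hf (resH x z))) (hf (x + resH x z - z))
  rw [collisionBracket, hz]
  linarith

lemma mul_volume_real_le_neg_collision {f : ℝ → ℝ} {M : ℝ} (hf : Measurable f)
    (hM : ∀ t, |f t| ≤ M) {x : ℝ} (hx : x ∈ Ioo 0 (2 * π))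
    (hneg : ∀ z ∈ Ioo 0 (2 * π), collisionBracket f x z ≤ 0)
    {s : Set ℝ} (hs : MeasurableSet s) (hsub : s ⊆ Ioo 0 (2 * π)) {w c : ℝ}
    (hweight : ∀ z ∈ s, w ≤ collisionWeight x z) (hbracket : ∀ z ∈ s, collisionBracket f x z ≤ -c)
    (hc : 0 ≤ c) : w * c * volume.real s ≤ -collision f x := by
  have hint := (integrableOn_collisionWeight_mul_collisionBracket hf hM hx).neg
  rw [collision_eq_setIntegral, ← integral_neg]
  calc w * c * volume.real s
      ≤ ∫ z in s, -(collisionWeight x z * collisionBracket f x z) := by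
        refine setIntegral_ge_of_const_le_real hs
          (measure_ne_top_of_subset hsub measure_Ioo_lt_top.ne) (fun z hz ↦ ?_) (hint.mono_set hsub)
        rw [← mul_neg]
        exact mul_le_mul (hweight z hz) (by linarith [hbracket z hz]) hc
          (collisionWeight_nonneg x z)
    _ ≤ ∫ z in Ioo 0 (2 * π), -(collisionWeight x z * collisionBracket f x z) := by
        refine setIntegral_mono_set hint ?_ hsub.eventuallyLE
        filter_upwards [ae_restrict_mem measurableSet_Ioo] with z hz
        exact neg_nonneg.2
          (mul_nonpos_of_nonneg_of_nonpos (collisionWeight_nonneg x z) (hneg z hz))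

end CollisionIntegrand

section Arc

/-- The set of reals congruent modulo `2 * π` to a point at distance at most `r` from `c`: a closed
arc of the circle, seen as a `2 * π`-periodic subset of the line. -/
def arc (c r : ℝ) : Set ℝ :=
  ((↑) : ℝ → AddCircle (2 * π)) ⁻¹' Metric.closedBall (c : AddCircle (2 * π)) r

lemma measurableSet_arc (c r : ℝ) : MeasurableSet (arc c r) :=
  (Metric.isClosed_closedBall.preimage (AddCircle.continuous_mk' _)).measurableSet

lemma add_two_pi_mem_arc_iff {c r t : ℝ} : t + 2 * π ∈ arc c r ↔ t ∈ arc c r := by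
  rw [arc, mem_preimage, mem_preimage, AddCircle.coe_add_period]

lemma mem_arc_iff_abs_sub_le {c r t : ℝ} (ht : |t - c| < 2 * π - r) :
    t ∈ arc c r ↔ |t - c| ≤ r := by
  rw [arc, AddCircle.coe_real_preimage_closedBall_eq_iUnion, mem_iUnion]
  simp only [Metric.mem_closedBall, Real.dist_eq]
  refine ⟨fun ⟨k, hk⟩ ↦ ?_, fun h ↦ ⟨0, by simpa using h⟩⟩
  obtain rfl | hk0 := eq_or_ne k 0
  · simpa using hk
  have hk1 : (1 : ℝ) ≤ |(k : ℝ)| := by exact_mod_cast Int.one_le_abs hk0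
  have hperiod : |(k : ℝ)| * (2 * π) ≤ |t - c| + |t - (c + k • (2 * π))| := by
    calc |(k : ℝ)| * (2 * π) = |(k : ℝ) * (2 * π)| := by rw [abs_mul, abs_of_pos two_pi_pos]
      _ = |(t - c) - (t - (c + k • (2 * π)))| := by rw [zsmul_eq_mul]; ring_nf
      _ ≤ |t - c| + |t - (c + k • (2 * π))| := abs_sub _ _
  nlinarith [two_pi_pos]

lemma Ioo_inter_arc {c r : ℝ} (hr : r < c) (hc : c + r < 2 * π) :
    Ioo 0 (2 * π) ∩ arc c r = Icc (c - r) (c + r) := by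
  ext t
  rw [← Real.closedBall_eq_Icc, Metric.mem_closedBall, Real.dist_eq]
  constructor
  · rintro ⟨ht, htarc⟩
    exact (mem_arc_iff_abs_sub_le
      (abs_lt.2 ⟨by linarith [ht.1], by linarith [ht.2]⟩)).1 htarc
  · intro ht
    have ht' := abs_le.1 ht
    exact ⟨⟨by linarith, by linarith⟩, (mem_arc_iff_abs_sub_le (by linarith)).2 ht⟩

lemma μ2π_arc {c r : ℝ} (hr : r < c) (hc : c + r < 2 * π) :
    μ2π (arc c r) = ENNReal.ofReal (2 * r) := by
  rw [μ2π, Measure.restrict_apply (measurableSet_arc c r), inter_comm, Ioo_inter_arc hr hc,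
    Real.volume_Icc]
  ring_nf

lemma eLpNorm_indicator_arc_le {p c r A : ℝ} (hp : 0 < p) (hA : 0 ≤ A) (hr0 : 0 ≤ r) (hr : r < c)
    (hc : c + r < 2 * π) :
    eLpNorm ((arc c r).indicator fun _ ↦ A) (ENNReal.ofReal p) μ2π ≤
      ENNReal.ofReal (A * (2 * r) ^ (1 / p)) := by
  refine (eLpNorm_indicator_const_le _ _).trans_eq ?_
  rw [μ2π_arc hr hc, ENNReal.toReal_ofReal hp.le, Real.enorm_of_nonneg hA,
    ENNReal.ofReal_rpow_of_nonneg (by positivity) (by positivity), ENNReal.ofReal_mul hA]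

end Arc

section TwoBump

variable {η A B x z t : ℝ}

/-- The test function of height `A` on the arc of radius `4 * η ^ 2` around `π / 2`, of height `B`
on the arc of radius `η` around `3 * π / 2`, and zero elsewhere. -/
def twoBump (η A B : ℝ) : ℝ → ℝ :=
  (arc (π / 2) (4 * η ^ 2)).indicator (fun _ ↦ A) + (arc (3 * π / 2) η).indicator (fun _ ↦ B)

lemma measurable_twoBump (η A B : ℝ) : Measurable (twoBump η A B) :=
  (measurable_const.indicator (measurableSet_arc _ _)).add
    (measurable_const.indicator (measurableSet_arc _ _))

lemma periodic_twoBump (η A B : ℝ) : Function.Periodic (twoBump η A B) (2 * π) := fun t ↦ by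
  classical
  simp only [twoBump, Pi.add_apply, indicator_apply, add_two_pi_mem_arc_iff]

lemma twoBump_nonneg (hA : 0 ≤ A) (hB : 0 ≤ B) (t : ℝ) : 0 ≤ twoBump η A B t :=
  add_nonneg (indicator_nonneg (fun _ _ ↦ hA) t) (indicator_nonneg (fun _ _ ↦ hB) t)

lemma abs_twoBump_le (η A B t : ℝ) : |twoBump η A B t| ≤ |A| + |B| :=
  (abs_add_le _ _).trans (add_le_add (norm_indicator_le_norm_self (fun _ ↦ A) t)
    (norm_indicator_le_norm_self (fun _ ↦ B) t))

lemma twoBump_eq_left (hη : η ∈ Ioc 0 (1 / 10)) (ht : |t - π / 2| ≤ 4 * η ^ 2) :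
    twoBump η A B t = A := by
  obtain ⟨hη0, hη1⟩ := hη
  have hπ := pi_gt_three
  have hsq : 4 * η ^ 2 ≤ 1 / 25 := by nlinarith
  have ht' := abs_le.1 ht
  have hright : t ∉ arc (3 * π / 2) η := by
    rw [mem_arc_iff_abs_sub_le (abs_lt.2 ⟨by linarith, by linarith⟩), abs_le]
    exact fun h ↦ by linarith [h.1]
  rw [twoBump, Pi.add_apply, indicator_of_mem ((mem_arc_iff_abs_sub_le (by linarith)).2 ht),
    indicator_of_notMem hright, add_zero]

lemma notMem_arc_pi_div_two (hη : η ∈ Ioc 0 (1 / 10)) (ht : |t + π / 2| ≤ 1) :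
    t ∉ arc (π / 2) (4 * η ^ 2) := by
  have hπ := pi_gt_three
  have hsq : 4 * η ^ 2 ≤ 1 / 25 := by nlinarith [hη.1, hη.2]
  have ht' := abs_le.1 ht
  rw [mem_arc_iff_abs_sub_le (abs_lt.2 ⟨by linarith, by linarith⟩), abs_le]
  exact fun h ↦ by linarith [h.1]

lemma twoBump_eq_zero_or_eq_right (hη : η ∈ Ioc 0 (1 / 10)) (ht : |t + π / 2| ≤ 1) :
    twoBump η A B t = 0 ∨ twoBump η A B t = B := by
  rw [twoBump, Pi.add_apply, indicator_of_notMem (notMem_arc_pi_div_two hη ht), zero_add]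
  exact indicator_eq_zero_or_self _ _ t

lemma twoBump_eq_right (hη : η ∈ Ioc 0 (1 / 10)) (ht : |t - 3 * π / 2| ≤ η) :
    twoBump η A B t = B := by
  obtain ⟨hη0, hη1⟩ := hη
  have hleft : t ∉ arc (π / 2) (4 * η ^ 2) := by
    rw [← sub_add_cancel t (2 * π), add_two_pi_mem_arc_iff]
    refine notMem_arc_pi_div_two ⟨hη0, hη1⟩ ?_
    rw [show t - 2 * π + π / 2 = t - 3 * π / 2 by ring]
    linarith
  rw [twoBump, Pi.add_apply, indicator_of_notMem hleft, zero_add,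
    indicator_of_mem ((mem_arc_iff_abs_sub_le (by linarith [pi_gt_three])).2 ht)]

lemma twoBump_eq_zero (hη : η ∈ Ioc 0 (1 / 10)) (ht : |t| ≤ 1) : twoBump η A B t = 0 := by
  obtain ⟨hη0, hη1⟩ := hη
  have hπ := pi_gt_three
  have hsq : 4 * η ^ 2 ≤ 1 / 25 := by nlinarith
  have ht' := abs_le.1 ht
  have hleft : t ∉ arc (π / 2) (4 * η ^ 2) := by
    rw [mem_arc_iff_abs_sub_le (abs_lt.2 ⟨by linarith, by linarith⟩), abs_le]
    exact fun h ↦ by linarith [h.1]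
  have hright : t ∉ arc (3 * π / 2) η := by
    rw [mem_arc_iff_abs_sub_le (abs_lt.2 ⟨by linarith, by linarith⟩), abs_le]
    exact fun h ↦ by linarith [h.1]
  rw [twoBump, Pi.add_apply, indicator_of_notMem hleft, indicator_of_notMem hright, add_zero]

lemma collisionBracket_twoBump_le (hη : η ∈ Ioc 0 (1 / 10)) (hB : 0 ≤ B) (hBA : 2 * B ≤ A)
    (hx : |x - π / 2| ≤ η ^ 2) (hz : |z - 3 * π / 2| ≤ η) :
    collisionBracket (twoBump η A B) x z ≤ -(A ^ 2 * B) := by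
  have hresH := abs_resH_sub_pi_div_two_le_four_mul_sq hη.2 hx hz
  have hp₃ : |x + resH x z - z + π / 2| ≤ 1 := by
    have hsq : η ^ 2 ≤ 1 / 100 := by nlinarith [hη.1, hη.2]
    have hx' := abs_le.1 hx
    have hz' := abs_le.1 hz
    have hresH' := abs_le.1 hresH
    exact abs_le.2 ⟨by linarith [hη.2], by linarith [hη.2]⟩
  rw [collisionBracket, twoBump_eq_left hη (hx.trans (by linarith [sq_nonneg η])),
    twoBump_eq_left hη hresH, twoBump_eq_right hη hz]
  rcases twoBump_eq_zero_or_eq_right (A := A) (B := B) hη hp₃ with h | h <;> rw [h]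
  · linarith
  · nlinarith [mul_nonneg (mul_nonneg (by linarith : 0 ≤ A) hB) (sub_nonneg.2 hBA)]

lemma collisionBracket_twoBump_eq_zero (hη : η ∈ Ioc 0 (1 / 10)) (hx : |x - π / 2| ≤ η ^ 2)
    (hz : |z - π / 2| ≤ 4 * η ^ 2) : collisionBracket (twoBump η A B) x z = 0 := by
  have hsq : η ^ 2 ≤ 1 / 100 := by nlinarith [hη.1, hη.2]
  have hzx : |z - x| ≤ 1 / 20 := by
    linarith [abs_sub_le z (π / 2) x, abs_sub_comm x (π / 2)]
  have hresH : |resH x z| ≤ 9 / 40 := (abs_resH_le (by linarith)).trans (by linarith)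
  have hp₃ : |x + resH x z - z| ≤ 1 := by
    rw [show x + resH x z - z = resH x z - (z - x) by ring]
    linarith [abs_sub (resH x z) (z - x)]
  rw [collisionBracket, twoBump_eq_zero hη (by linarith : |resH x z| ≤ 1), twoBump_eq_zero hη hp₃]
  ring

lemma collisionBracket_twoBump_nonpos (hη : η ∈ Ioc 0 (1 / 10)) (hB : 0 ≤ B) (hBA : 2 * B ≤ A)
    (hx : |x - π / 2| ≤ η ^ 2) (hz : z ∈ Ioo 0 (2 * π)) :
    collisionBracket (twoBump η A B) x z ≤ 0 := by
  have hπ := pi_gt_three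
  have hsq : 4 * η ^ 2 ≤ 1 / 25 := by nlinarith [hη.1, hη.2]
  by_cases hleft : z ∈ arc (π / 2) (4 * η ^ 2)
  · rw [mem_arc_iff_abs_sub_le (abs_lt.2 ⟨by linarith [hz.1], by linarith [hz.2]⟩)] at hleft
    exact (collisionBracket_twoBump_eq_zero hη hx hleft).le
  by_cases hright : z ∈ arc (3 * π / 2) η
  · rw [mem_arc_iff_abs_sub_le
      (abs_lt.2 ⟨by linarith [hz.1, hη.2], by linarith [hz.2, hη.2]⟩)] at hright
    exact (collisionBracket_twoBump_le hη hB hBA hx hright).trans (neg_nonpos.2 (by positivity))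
  · refine collisionBracket_nonpos_of_eq_zero (twoBump_nonneg (by linarith) hB) ?_
    rw [twoBump, Pi.add_apply, indicator_of_notMem hleft, indicator_of_notMem hright, add_zero]

lemma le_neg_collision_twoBump (hη : η ∈ Ioc 0 (1 / 10)) (hB : 0 ≤ B) (hBA : 2 * B ≤ A)
    (hx : |x - π / 2| ≤ η ^ 2) : A ^ 2 * B * η / 16 ≤ -collision (twoBump η A B) x := by
  have hπ := pi_gt_three
  have hsq : η ^ 2 ≤ 1 / 100 := by nlinarith [hη.1, hη.2]
  have hx' := abs_le.1 hx
  have hmem {z : ℝ} (hz : z ∈ Icc (3 * π / 2 - η) (3 * π / 2 + η)) : |z - 3 * π / 2| ≤ η :=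
    abs_le.2 ⟨by linarith [hz.1], by linarith [hz.2]⟩
  calc A ^ 2 * B * η / 16
      = 1 / 32 * (A ^ 2 * B) * volume.real (Icc (3 * π / 2 - η) (3 * π / 2 + η)) := by
        rw [Real.volume_real_Icc_of_le (by linarith [hη.1])]
        ring
    _ ≤ -collision (twoBump η A B) x :=
        mul_volume_real_le_neg_collision (measurable_twoBump η A B) (abs_twoBump_le η A B)
          ⟨by linarith, by linarith⟩ (fun z hz ↦ collisionBracket_twoBump_nonpos hη hB hBA hx hz)
          measurableSet_Icc (Icc_subset_Ioo (by linarith [hη.2]) (by linarith [hη.2]))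
          (fun z hz ↦ one_div_le_collisionWeight (hx.trans hsq) ((hmem hz).trans hη.2))
          (fun z hz ↦ collisionBracket_twoBump_le hη hB hBA hx (hmem hz)) (by positivity)

lemma eLpNorm_twoBump_le {p : ℝ} (hp : 0 < p) (hη : η ∈ Ioc 0 (1 / 10)) (hA : 0 ≤ A)
    (hB : 0 ≤ B) :
    eLpNorm (twoBump η A B) (ENNReal.ofReal p) μ2π ≤
      (ENNReal.ofReal p).LpAddConst *
        ENNReal.ofReal (A * (8 * η ^ 2) ^ (1 / p) + B * (2 * η) ^ (1 / p)) := by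
  obtain ⟨hη0, hη1⟩ := hη
  have hπ := pi_gt_three
  have hsq : 4 * η ^ 2 ≤ 1 / 25 := by nlinarith
  refine (eLpNorm_add_le'
    (measurable_const.indicator (measurableSet_arc _ _)).aestronglyMeasurable
    (measurable_const.indicator (measurableSet_arc _ _)).aestronglyMeasurable _).trans ?_
  rw [ENNReal.ofReal_add (by positivity) (by positivity), show 8 * η ^ 2 = 2 * (4 * η ^ 2) by ring]
  gcongr
  · exact eLpNorm_indicator_arc_le hp hA (by positivity) (by linarith) (by linarith)
  · exact eLpNorm_indicator_arc_le hp hB hη0.le (by linarith) (by linarith)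

lemma le_eLpNorm_collision_twoBump {p : ℝ} (hp : 0 < p) (hη : η ∈ Ioc 0 (1 / 10)) (hB : 0 ≤ B)
    (hBA : 2 * B ≤ A) :
    ENNReal.ofReal (A ^ 2 * B * η / 16 * (2 * η ^ 2) ^ (1 / p)) ≤
      eLpNorm (collision (twoBump η A B)) (ENNReal.ofReal p) μ2π := by
  have hπ := pi_gt_three
  have hη0 := hη.1
  have hsq : η ^ 2 ≤ 1 / 100 := by nlinarith [hη.2]
  have hD : 0 ≤ A ^ 2 * B * η / 16 := by positivity
  have hlower : ∀ᵐ x ∂μ2π, x ∈ arc (π / 2) (η ^ 2) →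
      (A ^ 2 * B * η / 16).toNNReal ≤ ‖collision (twoBump η A B) x‖₊ := by
    filter_upwards [ae_restrict_mem measurableSet_Ioo] with x hx hxarc
    rw [mem_arc_iff_abs_sub_le (abs_lt.2 ⟨by linarith [hx.1], by linarith [hx.2]⟩)] at hxarc
    rw [Real.toNNReal_le_iff_le_coe, coe_nnnorm, Real.norm_eq_abs]
    exact (le_neg_collision_twoBump hη hB hBA hxarc).trans (neg_le_abs _)
  have h := le_eLpNorm_of_bddBelow (ENNReal.ofReal_pos.2 hp).ne' ENNReal.ofReal_ne_top _
    (measurableSet_arc _ _) hlower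
  rwa [μ2π_arc (by linarith) (by linarith), ENNReal.toReal_ofReal hp.le, ENNReal.smul_def,
    smul_eq_mul, ENNReal.ofReal_rpow_of_nonneg (by positivity) (by positivity),
    ← ENNReal.ofReal.eq_1, ← ENNReal.ofReal_mul hD] at h

end TwoBump

section Blowup

variable {p η : ℝ}

/-- The two-bump function with amplitudes scaled so that each bump has `L^p` norm of order one. -/
def normalizedBump (p η : ℝ) : ℝ → ℝ :=
  twoBump η (2 * η ^ (-2 / p)) (η ^ (-1 / p))

lemma mul_sq_rpow_one_div {c : ℝ} (hc : 0 ≤ c) (hη : 0 ≤ η) :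
    (c * η ^ 2) ^ (1 / p) = c ^ (1 / p) * η ^ (2 / p) := by
  rw [mul_rpow hc (by positivity), ← rpow_natCast_mul hη, Nat.cast_ofNat, mul_one_div]

lemma two_mul_rpow_neg_one_div_le (hp : 0 < p) (hη : η ∈ Ioc 0 (1 / 10)) :
    2 * η ^ (-1 / p) ≤ 2 * η ^ (-2 / p) := by
  gcongr 2 * ?_
  refine rpow_le_rpow_of_exponent_ge hη.1 (by linarith [hη.2]) ?_
  gcongr
  norm_num

lemma eLpNorm_normalizedBump_le (hp : 0 < p) (hη : η ∈ Ioc 0 (1 / 10)) :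
    eLpNorm (normalizedBump p η) (ENNReal.ofReal p) μ2π ≤
      (ENNReal.ofReal p).LpAddConst * ENNReal.ofReal (2 * 8 ^ (1 / p) + 2 ^ (1 / p)) := by
  have hη0 := hη.1
  refine (eLpNorm_twoBump_le hp hη (by positivity) (by positivity)).trans_eq ?_
  have hleft : 2 * η ^ (-2 / p) * (8 * η ^ 2) ^ (1 / p) = 2 * 8 ^ (1 / p) := by
    have hcancel : η ^ (-2 / p) * η ^ (2 / p) = 1 := by
      rw [neg_div, rpow_neg hη0.le, inv_mul_cancel₀ (by positivity)]
    rw [mul_sq_rpow_one_div (by norm_num) hη0.le]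
    linear_combination 2 * 8 ^ (1 / p) * hcancel
  have hright : η ^ (-1 / p) * (2 * η) ^ (1 / p) = 2 ^ (1 / p) := by
    have hcancel : η ^ (-1 / p) * η ^ (1 / p) = 1 := by
      rw [neg_div, rpow_neg hη0.le, inv_mul_cancel₀ (by positivity)]
    rw [mul_rpow (by norm_num) hη0.le]
    linear_combination 2 ^ (1 / p) * hcancel
  rw [hleft, hright]

lemma le_eLpNorm_collision_normalizedBump (hp : 0 < p) (hη : η ∈ Ioc 0 (1 / 10)) :
    ENNReal.ofReal (2 ^ (1 / p) / 4 * η ^ (1 - 3 / p)) ≤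
      eLpNorm (collision (normalizedBump p η)) (ENNReal.ofReal p) μ2π := by
  have hη0 := hη.1
  have hexp : (η ^ (-2 / p)) ^ 2 * η ^ (-1 / p) * η * η ^ (2 / p) = η ^ (1 - 3 / p) := by
    rw [← rpow_mul_natCast hη0.le, ← rpow_add hη0, ← rpow_add_one hη0.ne', ← rpow_add hη0]
    congr 1
    push_cast
    ring
  calc ENNReal.ofReal (2 ^ (1 / p) / 4 * η ^ (1 - 3 / p))
      = ENNReal.ofReal ((2 * η ^ (-2 / p)) ^ 2 * η ^ (-1 / p) * η / 16 *
          (2 * η ^ 2) ^ (1 / p)) := by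
        rw [mul_sq_rpow_one_div zero_le_two hη0.le, ← hexp]
        ring_nf
    _ ≤ eLpNorm (collision (normalizedBump p η)) (ENNReal.ofReal p) μ2π :=
        le_eLpNorm_collision_twoBump hp hη (by positivity) (two_mul_rpow_neg_one_div_le hp hη)

lemma tendsto_eLpNorm_collision_normalizedBump (hp : 0 < p) (hp3 : p < 3) :
    Filter.Tendsto (fun η ↦ eLpNorm (collision (normalizedBump p η)) (ENNReal.ofReal p) μ2π)
      (nhdsWithin 0 (Ioi 0)) (nhds ⊤) := by
  have hexp : 1 - 3 / p < 0 := by rw [sub_neg, one_lt_div hp]; exact hp3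
  have hlower : Filter.Tendsto (fun η : ℝ ↦ ENNReal.ofReal (2 ^ (1 / p) / 4 * η ^ (1 - 3 / p)))
      (nhdsWithin 0 (Ioi 0)) (nhds ⊤) :=
    ENNReal.tendsto_ofReal_atTop.comp
      ((tendsto_rpow_neg_nhdsGT_zero hexp).const_mul_atTop (by positivity))
  refine tendsto_of_tendsto_of_tendsto_of_le_of_le' hlower tendsto_const_nhds ?_
    (Filter.Eventually.of_forall fun _ ↦ le_top)
  filter_upwards [Ioc_mem_nhdsGT (by norm_num : (0 : ℝ) < 1 / 10)] with η hη
  exact le_eLpNorm_collision_normalizedBump hp hη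

lemma exists_bounded_seq_tendsto_eLpNorm_collision (hp : 0 < p) (hp3 : p < 3) :
    ∃ (f : ℕ → ℝ → ℝ) (C₀ : ℝ),
      (∀ n, Measurable (f n) ∧ Function.Periodic (f n) (2 * π) ∧ ∃ B : ℝ, ∀ x, |f n x| ≤ B) ∧
      (∀ n, eLpNorm (f n) (ENNReal.ofReal p) μ2π ≤ ENNReal.ofReal C₀) ∧
      Filter.Tendsto (fun n => eLpNorm (collision (f n)) (ENNReal.ofReal p) μ2π)
        Filter.atTop (nhds ⊤) := by
  set K := (ENNReal.ofReal p).LpAddConst * ENNReal.ofReal (2 * 8 ^ (1 / p) + 2 ^ (1 / p))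
  have hK_ne_top : K ≠ ⊤ :=
    ENNReal.mul_ne_top (ENNReal.LpAddConst_lt_top _).ne ENNReal.ofReal_ne_top
  have hη (n : ℕ) : ((n : ℝ) + 10)⁻¹ ∈ Ioc (0 : ℝ) (1 / 10) := by
    refine ⟨by positivity, ?_⟩
    rw [one_div]
    gcongr
    linarith [n.cast_nonneg (α := ℝ)]
  have hη_tendsto : Filter.Tendsto (fun n : ℕ ↦ ((n : ℝ) + 10)⁻¹) Filter.atTop
      (nhdsWithin 0 (Ioi 0)) :=
    tendsto_inv_atTop_nhdsGT_zero.comp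
      (Filter.tendsto_atTop_add_const_right _ _ tendsto_natCast_atTop_atTop)
  refine ⟨fun n ↦ normalizedBump p ((n : ℝ) + 10)⁻¹, K.toReal, fun n ↦ ?_, fun n ↦ ?_, ?_⟩
  · exact ⟨measurable_twoBump _ _ _, periodic_twoBump _ _ _, _, abs_twoBump_le _ _ _⟩
  · rw [ENNReal.ofReal_toReal hK_ne_top]
    exact eLpNorm_normalizedBump_le hp (hη n)
  · exact (tendsto_eLpNorm_collision_normalizedBump hp hp3).comp hη_tendsto

end Blowup

theorem stmt1_general (p : ℝ) (hp : 0 < p) (hp3 : p < 3) :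
    (∃ (f : ℕ → ℝ → ℝ) (C₀ : ℝ),
      (∀ n, Measurable (f n) ∧ Function.Periodic (f n) (2 * π) ∧ ∃ B : ℝ, ∀ x, |f n x| ≤ B) ∧
      (∀ n, eLpNorm (f n) (ENNReal.ofReal p) μ2π ≤ ENNReal.ofReal C₀) ∧
      Filter.Tendsto (fun n => eLpNorm (collision (f n)) (ENNReal.ofReal p) μ2π)
        Filter.atTop (nhds ⊤)) ∧
    ¬ ∃ C' : ℝ, ∀ f : ℝ → ℝ, Measurable f → Function.Periodic f (2 * π) →
        (∃ B : ℝ, ∀ x, |f x| ≤ B) →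
        eLpNorm (collision f) (ENNReal.ofReal p) μ2π ≤
          ENNReal.ofReal C' * (eLpNorm f (ENNReal.ofReal p) μ2π) ^ 3 := by
  obtain ⟨f, C₀, hf, hC₀, htendsto⟩ := exists_bounded_seq_tendsto_eLpNorm_collision hp hp3
  refine ⟨⟨f, C₀, hf, hC₀, htendsto⟩, fun ⟨C', hC'⟩ ↦ ?_⟩
  have hfinite : ENNReal.ofReal C' * ENNReal.ofReal C₀ ^ 3 < ⊤ :=
    ENNReal.mul_lt_top ENNReal.ofReal_lt_top (ENNReal.pow_lt_top ENNReal.ofReal_lt_top)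
  obtain ⟨n, hn⟩ := (htendsto.eventually (lt_mem_nhds hfinite)).exists
  obtain ⟨hmeasurable, hperiodic, hbounded⟩ := hf n
  refine hn.not_ge ((hC' (f n) hmeasurable hperiodic hbounded).trans ?_)
  gcongr
  exact hC₀ n

/-- **Unboundedness of the collision operator on `L^p`, `1 ≤ p < 3`:** there is a
sequence of bounded measurable `2π`-periodic functions, uniformly bounded in
`L^p(0,2π)`, on which the collision operator blows up in `L^p(0,2π)`.  In particular,
no cubic bound `‖C[f]‖_{L^p} ≤ C′ ‖f‖_{L^p}³` can hold. -/
theorem stmt1 (p : ℝ) (hp1 : 1 ≤ p) (hp3 : p < 3) :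
    (∃ (f : ℕ → ℝ → ℝ) (C₀ : ℝ),
      (∀ n, Measurable (f n) ∧ Function.Periodic (f n) (2 * π) ∧ ∃ B : ℝ, ∀ x, |f n x| ≤ B) ∧
      (∀ n, eLpNorm (f n) (ENNReal.ofReal p) μ2π ≤ ENNReal.ofReal C₀) ∧
      Filter.Tendsto (fun n => eLpNorm (collision (f n)) (ENNReal.ofReal p) μ2π)
        Filter.atTop (nhds ⊤)) ∧
    ¬ ∃ C' : ℝ, ∀ f : ℝ → ℝ, Measurable f → Function.Periodic f (2 * π) →
        (∃ B : ℝ, ∀ x, |f x| ≤ B) →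
        eLpNorm (collision f) (ENNReal.ofReal p) μ2π ≤
          ENNReal.ofReal C' * (eLpNorm f (ENNReal.ofReal p) μ2π) ^ 3 := by
  exact stmt1_general p (by linarith) hp3
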